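/- arXiv:1011.2190 — 2 statements merged into one kernel-verified Lean document; each statement's English description precedes it below -/
import Mathlib

section
/- Let u ∈ 𝒢(Ω) with representative (u_ε)_ε. Then u is sublinear if and only if for each compact K ⊂⊂ Ω there exists a real number a > 0 such that u ∈ 𝒢^{L,a}(K). -/
open Filter MeasureTheory Metric Set
open scoped Topology BigOperators

noncomputable section

/-- Euclidean space ℝ^d. -/
abbrev Euc (d : ℕ) : Type := EuclideanSpace ℝ (Fin d)

variable {d : ℕ}

/-- "P ε holds for small ε". -/
def SmallE (P : ℝ → Prop) : Prop :=
  ∃ ε₀ : ℝ, 0 < ε₀ ∧ ∀ ε : ℝ, 0 < ε → ε < ε₀ → P ε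

/-- Directional derivative ∂ₑ u in the direction e. -/
def pderivDir {F : Type} [NormedAddCommGroup F] [NormedSpace ℝ F]
    (e : Euc d) (u : Euc d → F) : Euc d → F :=
  fun x => fderiv ℝ u x e

/-- Multi-index partial derivative ∂^α u. -/
def partialDeriv {F : Type} [NormedAddCommGroup F] [NormedSpace ℝ F]
    (α : Fin d → ℕ) (u : Euc d → F) : Euc d → F :=
  (List.finRange d).foldr
    (fun i v => (pderivDir (EuclideanSpace.single i (1 : ℝ)))^[α i] v) u

/-- p_{α,K}(u) = sup_{x ∈ K} |∂^α u(x)|. -/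
def pSemi {F : Type} [NormedAddCommGroup F] [NormedSpace ℝ F]
    (α : Fin d → ℕ) (K : Set (Euc d)) (u : Euc d → F) : ℝ :=
  sSup ((fun x => ‖partialDeriv α u x‖) '' K)

/-- p_{k,K}(u) = max_{|α| = k} p_{α,K}(u). -/
def pSemiK {F : Type} [NormedAddCommGroup F] [NormedSpace ℝ F]
    (k : ℕ) (K : Set (Euc d)) (u : Euc d → F) : ℝ :=
  sSup {y : ℝ | ∃ α : Fin d → ℕ, (∑ i, α i) = k ∧ y = pSemi α K u}

/-- Moderate nets of smooth functions on Ω. -/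
def Moderate (Ω : Set (Euc d)) (u : ℝ → Euc d → ℂ) : Prop :=
  (∀ ε ∈ Set.Ioo (0:ℝ) 1, ContDiffOn ℝ (⊤ : ℕ∞) (u ε) Ω) ∧
  ∀ K : Set (Euc d), IsCompact K → K ⊆ Ω → ∀ α : Fin d → ℕ,
    ∃ N : ℕ, SmallE fun ε => pSemi α K (u ε) ≤ ε ^ (-(N : ℝ))

/-- Negligible nets of smooth functions on Ω. -/
def Negligible (Ω : Set (Euc d)) (u : ℝ → Euc d → ℂ) : Prop :=
  (∀ ε ∈ Set.Ioo (0:ℝ) 1, ContDiffOn ℝ (⊤ : ℕ∞) (u ε) Ω) ∧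
  ∀ K : Set (Euc d), IsCompact K → K ⊆ Ω → ∀ α : Fin d → ℕ, ∀ m : ℕ,
    SmallE fun ε => pSemi α K (u ε) ≤ ε ^ (m : ℝ)

/-- The algebra of moderate nets. -/
abbrev ModNet (Ω : Set (Euc d)) : Type := {u : ℝ → Euc d → ℂ // Moderate Ω u}

/-- Two moderate nets are identified when their difference is negligible. -/
def nulRel (Ω : Set (Euc d)) (u v : ModNet Ω) : Prop :=
  Negligible Ω (fun ε x => u.1 ε x - v.1 ε x)

/-- The special Colombeau algebra 𝒢(Ω). -/
abbrev Colombeau (Ω : Set (Euc d)) : Type := Quot (nulRel Ω)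

/-- The valuation of a net of complex numbers, with values in EReal
(⊤ corresponding to nets with arbitrarily good decay). -/
def valuation (z : ℝ → ℂ) : EReal :=
  sSup ((fun b : ℝ => (b : EReal)) '' {b : ℝ | SmallE fun ε => ‖z ε‖ ≤ ε ^ b})

/-- The sharp norm e^{-v(z)} of a net of complex numbers. -/
def sharpNorm (z : ℝ → ℂ) : ℝ :=
  if valuation z = ⊤ then 0 else Real.exp (-(valuation z).toReal)

/-- P_{k,K}(u) = ‖(p_{k,K}(u_ε))_ε‖ (computed via a representative;
independent of the representative). -/
def PNorm (Ω : Set (Euc d)) (k : ℕ) (K : Set (Euc d)) (u : Colombeau Ω) : ℝ :=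
  sharpNorm fun ε => ((pSemiK k K ((Quot.out u).1 ε) : ℝ) : ℂ)

/-- P_{α,K}(u) = ‖(p_{α,K}(u_ε))_ε‖ for a multi-index α. -/
def PNormA (Ω : Set (Euc d)) (α : Fin d → ℕ) (K : Set (Euc d)) (u : Colombeau Ω) : ℝ :=
  sharpNorm fun ε => ((pSemi α K ((Quot.out u).1 ε) : ℝ) : ℂ)

/-- The ultra-pseudo-seminorm P_{α,K} applied to the difference u - v. -/
def PNormDiff (Ω : Set (Euc d)) (α : Fin d → ℕ) (K : Set (Euc d))
    (u v : Colombeau Ω) : ℝ :=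
  sharpNorm fun ε =>
    ((pSemi α K (fun x => (Quot.out u).1 ε x - (Quot.out v).1 ε x) : ℝ) : ℂ)

/-- The sharp topology on 𝒢(Ω): generated by the balls of the
ultra-pseudo-seminorms P_{α,K}. -/
def sharpTopology (Ω : Set (Euc d)) : TopologicalSpace (Colombeau Ω) :=
  TopologicalSpace.generateFrom
    {S | ∃ (u : Colombeau Ω) (α : Fin d → ℕ) (K : Set (Euc d)) (r : ℝ),
      IsCompact K ∧ K ⊆ Ω ∧ 0 < r ∧ S = {v | PNormDiff Ω α K u v < r}}

/-- K satisfies the segment condition: there is r > 0 such that every x ∈ K lies on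
d line segments of length r, in linearly independent (unit) directions, contained in K. -/
def SegmentCond (K : Set (Euc d)) : Prop :=
  ∃ r : ℝ, 0 < r ∧ ∀ x ∈ K, ∃ e : Fin d → Euc d, LinearIndependent ℝ e ∧
    ∀ i : Fin d, ‖e i‖ = 1 ∧ ∃ a : ℝ, a ≤ 0 ∧ 0 ≤ a + r ∧
      ∀ t : ℝ, a ≤ t → t ≤ a + r → x + t • e i ∈ K

/-- 𝒢^∞(K). -/
def GInfK (Ω : Set (Euc d)) (K : Set (Euc d)) : Set (Colombeau Ω) :=
  {u | ∃ v : ModNet Ω, Quot.mk (nulRel Ω) v = u ∧ ∃ N : ℕ,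
    ∀ α : Fin d → ℕ, SmallE fun ε => pSemi α K (v.1 ε) ≤ ε ^ (-(N : ℝ))}

/-- 𝒢^{L,a}(K), the generalized functions of sublinear growth with slope
smaller than a on K. -/
def GLaK (Ω : Set (Euc d)) (a : ℝ) (K : Set (Euc d)) : Set (Colombeau Ω) :=
  {u | ∃ v : ModNet Ω, Quot.mk (nulRel Ω) v = u ∧ ∃ a' : ℝ, a' < a ∧ ∃ b : ℝ,
    ∀ α : Fin d → ℕ,
      SmallE fun ε => pSemi α K (v.1 ε) ≤ ε ^ (-(a' * (∑ i, (α i : ℝ))) - b)}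

/-- 𝒢^{L,0}(K) = ⋂_{a>0} 𝒢^{L,a}(K). -/
def GL0K (Ω : Set (Euc d)) (K : Set (Euc d)) : Set (Colombeau Ω) :=
  {u | ∀ a : ℝ, 0 < a → u ∈ GLaK Ω a K}

/-- 𝒢^∞(Ω) = ⋂_{K⊂⊂Ω} 𝒢^∞(K). -/
def GInfOmega (Ω : Set (Euc d)) : Set (Colombeau Ω) :=
  {u | ∀ K : Set (Euc d), IsCompact K → K ⊆ Ω → u ∈ GInfK Ω K}

/-- 𝒢^{L,a}(Ω) = ⋂_{K⊂⊂Ω} 𝒢^{L,a}(K). -/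
def GLaOmega (Ω : Set (Euc d)) (a : ℝ) : Set (Colombeau Ω) :=
  {u | ∀ K : Set (Euc d), IsCompact K → K ⊆ Ω → u ∈ GLaK Ω a K}

/-- 𝒢^{L,0}(Ω) = ⋂_{K⊂⊂Ω} 𝒢^{L,0}(K). -/
def GL0Omega (Ω : Set (Euc d)) : Set (Colombeau Ω) :=
  {u | ∀ K : Set (Euc d), IsCompact K → K ⊆ Ω → u ∈ GL0K Ω K}

/-- u ∈ 𝒢(Ω) is sublinear. -/
def Sublinear (Ω : Set (Euc d)) (u : Colombeau Ω) : Prop :=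
  ∃ v : ModNet Ω, Quot.mk (nulRel Ω) v = u ∧
    ∀ K : Set (Euc d), IsCompact K → K ⊆ Ω →
      ∀ x : ℝ → Euc d, (∀ ε ∈ Set.Ioo (0:ℝ) 1, x ε ∈ K) →
        ∃ k : ℝ, ∃ p : ℕ → ℝ,
          Filter.Tendsto (fun n : ℕ => p n + k * n) atTop atTop ∧
          ∀ α : Fin d → ℕ,
            SmallE fun ε => ‖partialDeriv α (v.1 ε) (x ε)‖ ≤ ε ^ (p (∑ i, α i))

/-- The scaled mollifier ψ_δ(x) = δ^{-d} ψ(x/δ). -/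
def mollify (ψ : Euc d → ℝ) (δ : ℝ) : Euc d → ℝ :=
  fun x => ((δ : ℝ) ^ d)⁻¹ * ψ (δ⁻¹ • x)

/-- Convolution u ⋆ ψ (with a real-valued kernel ψ). -/
def conv (u : Euc d → ℂ) (ψ : Euc d → ℝ) : Euc d → ℂ :=
  fun x => ∫ t : Euc d, u (x - t) * ((ψ t : ℝ) : ℂ)

/-- 𝒢_c(Ω): compactly supported generalized functions (restriction to Ω∖K
is 0 in 𝒢(Ω∖K), i.e. some representative is negligible on Ω∖K). -/
def GCompact (Ω : Set (Euc d)) : Set (Colombeau Ω) :=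
  {u | ∃ v : ModNet Ω, Quot.mk (nulRel Ω) v = u ∧
    ∃ K : Set (Euc d), IsCompact K ∧ K ⊆ Ω ∧ Negligible (Ω \ K) v.1}

structure DiffTriple (Ω : Set (Euc d)) (f g h : Euc d → ℂ) : Prop where
  hf : ContDiffOn ℝ (⊤ : ℕ∞) f Ω
  hg : ContDiffOn ℝ (⊤ : ℕ∞) g Ω
  hh : ContDiffOn ℝ (⊤ : ℕ∞) h Ω
  eq : ∀ x ∈ Ω, h x = f x - g x

lemma contDiffOn_pderivDir {Ω : Set (Euc d)} (hΩ : IsOpen Ω) (e : Euc d) {f : Euc d → ℂ}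
    (hf : ContDiffOn ℝ (⊤ : ℕ∞) f Ω) : ContDiffOn ℝ (⊤ : ℕ∞) (pderivDir e f) Ω := by
  have h := hf.fderiv_of_isOpen (m := ((⊤ : ℕ∞) : WithTop ℕ∞)) hΩ (by simp)
  exact h.clm_apply contDiffOn_const

lemma DiffTriple.pderivDir {Ω : Set (Euc d)} (hΩ : IsOpen Ω) (e : Euc d) {f g h : Euc d → ℂ}
    (H : DiffTriple Ω f g h) :
    DiffTriple Ω (pderivDir e f) (pderivDir e g) (pderivDir e h) := by
  refine ⟨contDiffOn_pderivDir hΩ e H.hf, contDiffOn_pderivDir hΩ e H.hg,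
    contDiffOn_pderivDir hΩ e H.hh, ?_⟩
  intro x hx
  have hn := hΩ.mem_nhds hx
  have hf := (H.hf.differentiableOn (by simp)).differentiableAt hn
  have hg := (H.hg.differentiableOn (by simp)).differentiableAt hn
  have he : h =ᶠ[𝓝 x] (f - g) := by
    filter_upwards [hn] with y hy
    exact H.eq y hy
  simp only [_root_.pderivDir]
  rw [he.fderiv_eq, fderiv_sub hf hg]
  rfl

lemma DiffTriple.iter {Ω : Set (Euc d)} (hΩ : IsOpen Ω) (e : Euc d) (n : ℕ)
    {f g h : Euc d → ℂ} (H : DiffTriple Ω f g h) :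
    DiffTriple Ω ((_root_.pderivDir e)^[n] f) ((_root_.pderivDir e)^[n] g)
      ((_root_.pderivDir e)^[n] h) := by
  induction n with
  | zero => exact H
  | succ k ih =>
    simp only [Function.iterate_succ', Function.comp]
    exact ih.pderivDir hΩ e

lemma DiffTriple.part {Ω : Set (Euc d)} (hΩ : IsOpen Ω) (α : Fin d → ℕ)
    {f g h : Euc d → ℂ} (H : DiffTriple Ω f g h) :
    DiffTriple Ω (partialDeriv α f) (partialDeriv α g) (partialDeriv α h) := by
  unfold partialDeriv
  induction List.finRange d with
  | nil => exact H
  | cons i l ih => exact ih.iter hΩ _ _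

lemma norm_le_pSemi {Ω : Set (Euc d)} (hΩ : IsOpen Ω) (α : Fin d → ℕ) {f : Euc d → ℂ}
    (hf : ContDiffOn ℝ (⊤ : ℕ∞) f Ω) {K : Set (Euc d)} (hK : IsCompact K) (hKΩ : K ⊆ Ω)
    {x : Euc d} (hx : x ∈ K) : ‖partialDeriv α f x‖ ≤ pSemi α K f := by
  have H : DiffTriple Ω f f (fun _ => 0) := ⟨hf, hf, contDiffOn_const, by simp⟩
  have hc := ((H.part hΩ α).hf.continuousOn.mono hKΩ).norm
  exact le_csSup (hK.bddAbove_image hc) ⟨x, hx, rfl⟩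

lemma SmallE.and {P Q : ℝ → Prop} (hP : SmallE P) (hQ : SmallE Q) :
    SmallE fun ε => P ε ∧ Q ε := by
  obtain ⟨a, ha, h1⟩ := hP
  obtain ⟨b, hb, h2⟩ := hQ
  exact ⟨min a b, lt_min ha hb, fun ε h0 h => ⟨h1 ε h0 (h.trans_le (min_le_left _ _)),
    h2 ε h0 (h.trans_le (min_le_right _ _))⟩⟩

/-- Pointwise linear growth bound on K. -/
def LinGrowth (K : Set (Euc d)) (v : ℝ → Euc d → ℂ) : Prop :=
  ∃ a b : ℝ, ∀ α : Fin d → ℕ, SmallE fun ε => ∀ x ∈ K,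
    ‖partialDeriv α (v ε) x‖ ≤ ε ^ (-(a * (∑ i, (α i : ℝ))) - b)

lemma two_rpow_le {ε s m : ℝ} (h0 : 0 < ε) (h1 : ε < 1 / 2) (hm : s ≤ m) :
    ε ^ s + ε ^ m ≤ ε ^ (s - 1) := by
  have h2 : ε ^ m ≤ ε ^ s := Real.rpow_le_rpow_of_exponent_ge h0 (by linarith) hm
  have h3 : ε ^ s = ε ^ (s - 1) * ε := by
    rw [← Real.rpow_add_one h0.ne']; simp
  have h4 : 0 < ε ^ (s - 1) := Real.rpow_pos_of_pos h0 _
  nlinarith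

lemma LinGrowth.congr {Ω : Set (Euc d)} (hΩ : IsOpen Ω) {K : Set (Euc d)} (hK : IsCompact K)
    (hKΩ : K ⊆ Ω) (v w : ModNet Ω) (h : nulRel Ω v w) :
    LinGrowth K v.1 ↔ LinGrowth K w.1 := by
  have key : ∀ α : Fin d → ℕ, ∀ m : ℕ, SmallE fun ε => ∀ x ∈ K,
      ‖partialDeriv α (v.1 ε) x - partialDeriv α (w.1 ε) x‖ ≤ ε ^ (m : ℝ) := by
    intro α m
    obtain ⟨ε₀, hε₀, hh⟩ := h.2 K hK hKΩ α m
    refine ⟨min ε₀ 1, lt_min hε₀ one_pos, fun ε h0 hlt x hx => ?_⟩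
    have hI : ε ∈ Set.Ioo (0:ℝ) 1 := ⟨h0, hlt.trans_le (min_le_right _ _)⟩
    have T : DiffTriple Ω (v.1 ε) (w.1 ε) (fun x => v.1 ε x - w.1 ε x) :=
      ⟨v.2.1 ε hI, w.2.1 ε hI, h.1 ε hI, fun _ _ => rfl⟩
    rw [← (T.part hΩ α).eq x (hKΩ hx)]
    exact (norm_le_pSemi hΩ α (h.1 ε hI) hK hKΩ hx).trans
      (hh ε h0 (hlt.trans_le (min_le_left _ _)))
  have half : ∀ v w : ℝ → Euc d → ℂ, (∀ α : Fin d → ℕ, ∀ m : ℕ, SmallE fun ε => ∀ x ∈ K,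
      ‖partialDeriv α (v ε) x - partialDeriv α (w ε) x‖ ≤ ε ^ (m : ℝ)) →
      LinGrowth K v → LinGrowth K w := by
    rintro v w hd ⟨a, b, hab⟩
    refine ⟨a, b + 1, fun α => ?_⟩
    obtain ⟨m, hm⟩ := exists_nat_ge (-(a * (∑ i, (α i : ℝ))) - b)
    obtain ⟨ε₀, hε₀, hh⟩ := (hab α).and (hd α m)
    refine ⟨min ε₀ (1/2), lt_min hε₀ (by norm_num), fun ε h0 hlt x hx => ?_⟩
    obtain ⟨h1, h2⟩ := hh ε h0 (hlt.trans_le (min_le_left _ _))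
    have h3 := two_rpow_le h0 (hlt.trans_le (min_le_right _ _)) hm
    have h4 := norm_sub_norm_le (partialDeriv α (w ε) x) (partialDeriv α (v ε) x)
    rw [norm_sub_rev] at h4
    have h5 := h1 x hx
    have h6 := h2 x hx
    rw [show -(a * (∑ i, (α i : ℝ))) - (b + 1) = -(a * (∑ i, (α i : ℝ))) - b - 1 by ring]
    linarith
  refine ⟨half _ _ key, half _ _ ?_⟩
  intro α m
  obtain ⟨ε₀, hε₀, hh⟩ := key α m
  refine ⟨ε₀, hε₀, fun ε h0 hlt x hx => ?_⟩
  rw [norm_sub_rev]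
  exact hh ε h0 hlt x hx

lemma LinGrowth.congr_mk {Ω : Set (Euc d)} (hΩ : IsOpen Ω) {K : Set (Euc d)} (hK : IsCompact K)
    (hKΩ : K ⊆ Ω) (v w : ModNet Ω) (h : Quot.mk (nulRel Ω) v = Quot.mk (nulRel Ω) w) :
    LinGrowth K v.1 ↔ LinGrowth K w.1 := by
  have := congrArg (Quot.lift (fun v : ModNet Ω => LinGrowth K v.1)
    (fun a b hab => propext (LinGrowth.congr hΩ hK hKΩ a b hab))) h
  exact Iff.of_eq this

lemma frequently_bins {P : ℝ → Prop} (h : ¬ SmallE P) :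
    ∃ᶠ k : ℕ in atTop, ∃ ε : ℝ, 0 < ε ∧ ε < 1 ∧ ⌊1 / ε⌋₊ = k ∧ ¬ P ε := by
  rw [frequently_atTop]
  intro M
  unfold SmallE at h
  push Not at h
  obtain ⟨ε, h0, h1, h2⟩ := h (1 / (M + 2)) (by positivity)
  have hM : (M : ℝ) + 2 < 1 / ε := by
    rw [lt_div_iff₀ (by positivity)] at h1
    rw [lt_div_iff₀ h0]; linarith
  refine ⟨⌊1 / ε⌋₊, Nat.le_floor (by linarith), ε, h0, ?_, rfl, h2⟩
  have : 1 < 1 / ε := by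
    have : (0:ℝ) ≤ M := by positivity
    linarith
  rw [lt_div_iff₀ h0] at this; linarith

lemma exists_bins (Q : ℕ → ℕ → Prop) (h : ∀ n, ∃ᶠ k in atTop, Q n k) :
    ∃ N : ℕ → ℕ, ∀ n, ∃ᶠ k in atTop, N k = n ∧ Q n k := by
  obtain ⟨φ, hφ, hQ⟩ := Filter.extraction_forall_of_frequently (P := fun j => Q (Nat.unpair j).1)
    (fun j => h _)
  refine ⟨fun k => (Nat.unpair (Function.invFun φ k)).1, fun n => ?_⟩
  rw [frequently_atTop]
  intro M
  refine ⟨φ (Nat.pair n M), (Nat.right_le_pair n M).trans hφ.le_apply, ?_, ?_⟩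
  · simp [Function.leftInverse_invFun hφ.injective (Nat.pair n M)]
  · simpa using hQ (Nat.pair n M)

lemma growth_of_sublinear {K : Set (Euc d)} (v : ℝ → Euc d → ℂ)
    (H : ∀ x : ℝ → Euc d, (∀ ε ∈ Set.Ioo (0:ℝ) 1, x ε ∈ K) →
        ∃ k : ℝ, ∃ p : ℕ → ℝ,
          Filter.Tendsto (fun n : ℕ => p n + k * n) atTop atTop ∧
          ∀ α : Fin d → ℕ,
            SmallE fun ε => ‖partialDeriv α (v ε) (x ε)‖ ≤ ε ^ (p (∑ i, α i))) :
    ∃ n : ℕ, ∀ α : Fin d → ℕ,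
      SmallE fun ε => pSemi α K (v ε) ≤ ε ^ (-((n : ℝ) * (∑ i, (α i : ℝ))) - n) := by
  by_contra hcon
  push Not at hcon
  choose α hα using hcon
  -- the bad set
  let B : ℕ → ℝ → Euc d → Prop := fun n ε x => x ∈ K ∧
    ε ^ (-((n : ℝ) * (∑ i, (α n i : ℝ))) - n) < ‖partialDeriv (α n) (v ε) x‖
  have hB : ∀ n, ∃ᶠ k : ℕ in atTop, ∃ ε : ℝ, 0 < ε ∧ ε < 1 ∧ ⌊1 / ε⌋₊ = k ∧ ∃ x, B n ε x := by
    intro n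
    refine (frequently_bins (hα n)).mono ?_
    rintro k ⟨ε, h0, h1, h2, h3⟩
    refine ⟨ε, h0, h1, h2, ?_⟩
    rw [not_le] at h3
    have hne : K.Nonempty := by
      by_contra hK
      rw [Set.not_nonempty_iff_eq_empty] at hK
      have : pSemi (α n) K (v ε) = 0 := by simp [pSemi, hK]
      rw [this] at h3
      exact absurd h3 (not_lt.2 (Real.rpow_pos_of_pos h0 _).le)
    obtain ⟨_, ⟨x, hx, rfl⟩, hlt⟩ := exists_lt_of_lt_csSup (hne.image _) h3
    exact ⟨x, hx, hlt⟩
  obtain ⟨N, hN⟩ := exists_bins _ hB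
  obtain ⟨x₀, hx₀⟩ : K.Nonempty := by
    obtain ⟨k, ε, -, -, -, x, hx, -⟩ := (hB 0).exists
    exact ⟨x, hx⟩
  classical
  let x : ℝ → Euc d := fun ε =>
    if h : ∃ x, B (N ⌊1 / ε⌋₊) ε x then h.choose else x₀
  have hxB : ∀ ε, (∃ x, B (N ⌊1 / ε⌋₊) ε x) → B (N ⌊1 / ε⌋₊) ε (x ε) := by
    intro ε h
    simp only [x, dif_pos h]
    exact h.choose_spec
  obtain ⟨k, p, hp, hsmall⟩ := H x (by
    intro ε _
    by_cases h : ∃ x, B (N ⌊1 / ε⌋₊) ε x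
    · exact (hxB ε h).1
    · simp only [x, dif_neg h]; exact hx₀)
  have hpn : ∀ n : ℕ, p (∑ i, α n i) < -((n : ℝ) * ((∑ i, α n i : ℕ) : ℝ)) - n := by
    intro n
    obtain ⟨ε₀, hε₀, hh⟩ := hsmall (α n)
    obtain ⟨M, hM⟩ := exists_nat_gt (1 / ε₀)
    obtain ⟨j, hj, hNj, ε, h0, h1, h2, h3⟩ := (frequently_atTop.1 (hN n)) M
    have hε : ε < ε₀ := by
      have e1 : (j : ℝ) ≤ 1 / ε := by rw [← h2]; exact Nat.floor_le (by positivity)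
      have e2 : (M : ℝ) ≤ j := by exact_mod_cast hj
      exact (one_div_lt_one_div hε₀ h0).1 (by linarith)
    have hb := hxB ε (by rw [h2, hNj]; exact h3)
    rw [h2, hNj] at hb
    have := hb.2.trans_le (hh ε h0 hε)
    rw [Real.rpow_lt_rpow_left_iff_of_base_lt_one h0 h1] at this
    push_cast
    exact this
  obtain ⟨M, hM⟩ := eventually_atTop.1 (hp.eventually_ge_atTop 0)
  obtain ⟨C, hC⟩ : ∃ C : ℝ, ∀ m < M, -C ≤ p m := by
    refine ⟨∑ m ∈ Finset.range M, |p m|, fun m hm => ?_⟩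
    have := Finset.single_le_sum (f := fun m => |p m|) (fun i _ => abs_nonneg _)
      (Finset.mem_range.2 hm)
    have := neg_abs_le (p m)
    linarith
  obtain ⟨n, hn⟩ := exists_nat_gt (max k C)
  have hnk := (le_max_left k C).trans_lt hn
  have hnC := (le_max_right k C).trans_lt hn
  have h1 := hpn n
  have hm0 : (0:ℝ) ≤ ((∑ i, α n i : ℕ) : ℝ) := Nat.cast_nonneg _
  have hn0 : (0:ℝ) ≤ (n : ℝ) := Nat.cast_nonneg _
  by_cases hlt : (∑ i, α n i) < M
  · have := hC _ hlt
    nlinarith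
  · have := hM _ (not_lt.1 hlt)
    nlinarith

/-- u ∈ 𝒢(Ω) is sublinear iff for each compact K ⊂⊂ Ω there is
a > 0 with u ∈ 𝒢^{L,a}(K). -/
theorem sublinear_iff_forall_compact_GLa {d : ℕ} (Ω : Set (Euc d)) (hΩ : IsOpen Ω)
    (u : Colombeau Ω) :
    Sublinear Ω u ↔
      ∀ K : Set (Euc d), IsCompact K → K ⊆ Ω →
        ∃ a : ℝ, 0 < a ∧ u ∈ GLaK Ω a K := by
  constructor
  · rintro ⟨v, hv, H⟩ K hK hKΩ
    obtain ⟨n, hn⟩ := growth_of_sublinear v.1 (H K hK hKΩ)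
    exact ⟨n + 1, by positivity, v, hv, n, by linarith, n, hn⟩
  · intro H
    obtain ⟨v, rfl⟩ := Quot.exists_rep u
    refine ⟨v, rfl, fun K hK hKΩ x hx => ?_⟩
    obtain ⟨a, -, w, hw, a', -, b, hb⟩ := H K hK hKΩ
    have hwL : LinGrowth K w.1 := by
      refine ⟨a', b, fun α => ?_⟩
      obtain ⟨ε₀, hε₀, hh⟩ := hb α
      refine ⟨min ε₀ 1, lt_min hε₀ one_pos, fun ε h0 hlt x hx => ?_⟩
      exact (norm_le_pSemi hΩ α (w.2.1 ε ⟨h0, hlt.trans_le (min_le_right _ _)⟩) hK hKΩ hx).trans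
        (hh ε h0 (hlt.trans_le (min_le_left _ _)))
    obtain ⟨c, e, hce⟩ := (LinGrowth.congr_mk hΩ hK hKΩ w v hw).1 hwL
    refine ⟨c + 1, fun n => -(c * n) - e, ?_, fun α => ?_⟩
    · have : (fun n : ℕ => -(c * (n : ℝ)) - e + (c + 1) * n) = fun n : ℕ => (n : ℝ) + (-e) := by
        funext n; ring
      rw [this]
      exact tendsto_atTop_add_const_right _ _ tendsto_natCast_atTop_atTop
    · obtain ⟨ε₀, hε₀, hh⟩ := hce α
      refine ⟨min ε₀ 1, lt_min hε₀ one_pos, fun ε h0 hlt => ?_⟩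
      have := hh ε h0 (hlt.trans_le (min_le_left _ _)) (x ε)
        (hx ε ⟨h0, hlt.trans_le (min_le_right _ _)⟩)
      push_cast
      exact this

end
end

section
/- Let Ω ⊆ ℝ^d be open and let 𝒜 be the set of all u = [(u_ε)_ε] ∈ 𝒢_c(Ω) for which there exists N ∈ ℕ such that for all compact K ⊂⊂ Ω and all k ∈ ℕ, p_{k,K}(u_ε) ≤ ε^{−Nk−N} for small ε. Then 𝒜 is dense in 𝒢(Ω) with respect to the sharp topology. -/
open Filter MeasureTheory Metric Set
open scoped Topology BigOperators

noncomputable section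

variable {d : ℕ}

lemma smallE_iff {P : ℝ → Prop} : SmallE P ↔ ∀ᶠ ε in 𝓝[>] (0:ℝ), P ε := by
  rw [(nhdsGT_basis (0:ℝ)).eventually_iff]
  constructor
  · rintro ⟨a, ha, h⟩
    exact ⟨a, ha, fun x hx => h x hx.1 hx.2⟩
  · rintro ⟨a, ha, h⟩
    exact ⟨a, ha, fun x h1 h2 => h ⟨h1, h2⟩⟩

lemma ev_Ioo : ∀ᶠ ε in 𝓝[>] (0:ℝ), ε ∈ Set.Ioo (0:ℝ) 1 :=
  Ioo_mem_nhdsGT one_pos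

lemma ev_const (C : ℝ) : ∀ᶠ ε in 𝓝[>] (0:ℝ), C * ε ≤ 1 := by
  have h : Tendsto (fun ε : ℝ => C * ε) (𝓝[>] (0:ℝ)) (𝓝 (C * 0)) :=
    ((continuous_const.mul continuous_id).tendsto 0).mono_left nhdsWithin_le_nhds
  rw [mul_zero] at h
  exact h.eventually (eventually_le_nhds one_pos)

/-- absorb constants -/
lemma ev_absorb (C a b : ℝ) (hab : a + 1 ≤ b) :
    ∀ᶠ ε in 𝓝[>] (0:ℝ), C * ε ^ b ≤ ε ^ a := by
  filter_upwards [ev_const C, ev_Ioo] with ε h1 h2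
  rcases le_or_gt C 0 with hC | hC
  · exact (mul_nonpos_of_nonpos_of_nonneg hC (Real.rpow_nonneg h2.1.le _)).trans
      (Real.rpow_nonneg h2.1.le _)
  calc C * ε ^ b ≤ C * ε ^ (a + 1) := by
        exact mul_le_mul_of_nonneg_left
          (Real.rpow_le_rpow_of_exponent_ge h2.1 h2.2.le hab) hC.le
    _ = (C * ε) * ε ^ a := by rw [Real.rpow_add h2.1, Real.rpow_one]; ring
    _ ≤ 1 * ε ^ a := by gcongr; exact Real.rpow_nonneg h2.1.le _
    _ = _ := one_mul _

section words
variable {F : Type} [NormedAddCommGroup F] [NormedSpace ℝ F]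

/-- word derivative -/
def wD (l : List (Fin d)) (u : Euc d → F) : Euc d → F :=
  l.foldr (fun i v => pderivDir (EuclideanSpace.single i (1 : ℝ)) v) u

@[simp] lemma wD_nil (u : Euc d → F) : wD [] u = u := rfl

@[simp] lemma wD_cons (i : Fin d) (l : List (Fin d)) (u : Euc d → F) :
    wD (i :: l) u = pderivDir (EuclideanSpace.single i (1 : ℝ)) (wD l u) := rfl

lemma wD_append (l l' : List (Fin d)) (u : Euc d → F) :
    wD (l ++ l') u = wD l (wD l' u) := by
  simp [wD, List.foldr_append]

/-- the word of a multi-index -/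
def word (α : Fin d → ℕ) : List (Fin d) :=
  (List.finRange d).flatMap (fun i => List.replicate (α i) i)

lemma wD_replicate (n : ℕ) (i : Fin d) (u : Euc d → F) :
    wD (List.replicate n i) u = (pderivDir (EuclideanSpace.single i (1 : ℝ)))^[n] u := by
  induction n with
  | zero => rfl
  | succ n ih => rw [List.replicate_succ, wD_cons, ih, Function.iterate_succ_apply']

lemma partialDeriv_eq (α : Fin d → ℕ) (u : Euc d → F) :
    partialDeriv α u = wD (word α) u := by
  unfold partialDeriv word
  induction List.finRange d with
  | nil => rfl
  | cons i l ih => rw [List.foldr_cons, ih, List.flatMap_cons, wD_append, wD_replicate]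

lemma word_length (α : Fin d → ℕ) : (word α).length = ∑ i, α i := by
  simp [word, List.length_flatMap, Fin.sum_univ_def]

lemma word_perm (l : List (Fin d)) : l.Perm (word (fun i => l.count i)) := by
  rw [List.perm_iff_count]
  intro a
  rw [word, List.count_flatMap]
  have : (List.map (List.count a ∘ fun i => List.replicate (List.count i l) i) (List.finRange d)).sum
     = ∑ i, if i = a then List.count i l else 0 := by
    rw [Fin.sum_univ_def]
    congr 1
    apply List.map_congr_left
    intro i _
    simp [List.count_replicate]
  rw [this]
  simp

lemma pderivDir_congr {Ω : Set (Euc d)} (hΩ : IsOpen Ω) {u v : Euc d → F} (e : Euc d)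
    (h : EqOn u v Ω) : EqOn (pderivDir e u) (pderivDir e v) Ω := by
  intro x hx
  have : u =ᶠ[𝓝 x] v := h.eventuallyEq_of_mem (hΩ.mem_nhds hx)
  simp only [pderivDir, this.fderiv_eq]

lemma wD_congr {Ω : Set (Euc d)} (hΩ : IsOpen Ω) {u v : Euc d → F} (l : List (Fin d))
    (h : EqOn u v Ω) : EqOn (wD l u) (wD l v) Ω := by
  induction l with
  | nil => exact h
  | cons i l ih => exact pderivDir_congr hΩ _ ih

lemma pderivDir_smooth {Ω : Set (Euc d)} (hΩ : IsOpen Ω) {u : Euc d → F} (e : Euc d)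
    (h : ContDiffOn ℝ (⊤ : ℕ∞) u Ω) : ContDiffOn ℝ (⊤ : ℕ∞) (pderivDir e u) Ω := by
  have h1 : ContDiffOn ℝ (⊤ : ℕ∞) (fderiv ℝ u) Ω := h.fderiv_of_isOpen hΩ (by simp)
  exact h1.clm_apply contDiffOn_const

lemma wD_smooth {Ω : Set (Euc d)} (hΩ : IsOpen Ω) {u : Euc d → F} (l : List (Fin d))
    (h : ContDiffOn ℝ (⊤ : ℕ∞) u Ω) : ContDiffOn ℝ (⊤ : ℕ∞) (wD l u) Ω := by
  induction l with
  | nil => exact h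
  | cons i l ih => exact pderivDir_smooth hΩ _ ih

lemma cd_diff {Ω : Set (Euc d)} (hΩ : IsOpen Ω) {u : Euc d → F} 
    (h : ContDiffOn ℝ (⊤ : ℕ∞) u Ω) {x} (hx : x ∈ Ω) : DifferentiableAt ℝ u x :=
  (h.contDiffAt (hΩ.mem_nhds hx)).differentiableAt (by simp)

lemma pderivDir_comm {Ω : Set (Euc d)} (hΩ : IsOpen Ω) {u : Euc d → F} (e e' : Euc d)
    (h : ContDiffOn ℝ (⊤ : ℕ∞) u Ω) :
    EqOn (pderivDir e (pderivDir e' u)) (pderivDir e' (pderivDir e u)) Ω := by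
  intro x hx
  have h1 : ContDiffOn ℝ (⊤ : ℕ∞) (fderiv ℝ u) Ω := h.fderiv_of_isOpen hΩ (by simp)
  have h2 := cd_diff hΩ h1 hx
  have hs : IsSymmSndFDerivAt ℝ u x :=
    (h.contDiffAt (hΩ.mem_nhds hx)).isSymmSndFDerivAt (by simp; exact WithTop.coe_le_coe.2 le_top)
  have key : ∀ a b : Euc d, pderivDir a (pderivDir b u) x = fderiv ℝ (fderiv ℝ u) x a b := by
    intro a b
    have : HasFDerivAt (pderivDir b u) ((fderiv ℝ (fderiv ℝ u) x).flip b) x := by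
      have := h2.hasFDerivAt.clm_apply (hasFDerivAt_const b x)
      rw [ContinuousLinearMap.comp_zero, zero_add] at this
      exact this
    rw [pderivDir, this.fderiv]
    rfl
  rw [key, key]
  exact hs.eq _ _

lemma wD_perm {Ω : Set (Euc d)} (hΩ : IsOpen Ω) {u : Euc d → F} {l l' : List (Fin d)}
    (hp : l.Perm l')
    (h : ContDiffOn ℝ (⊤ : ℕ∞) u Ω) : EqOn (wD l u) (wD l' u) Ω := by
  induction hp with
  | nil => exact fun _ _ => rfl
  | cons i _ ih => exact pderivDir_congr hΩ _ ih
  | swap i j l => exact pderivDir_comm hΩ _ _ (wD_smooth hΩ l h)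
  | trans _ _ h1 h2 => exact h1.trans h2

lemma wD_eq_partialDeriv {Ω : Set (Euc d)} (hΩ : IsOpen Ω) {u : Euc d → F} (l : List (Fin d))
    (h : ContDiffOn ℝ (⊤ : ℕ∞) u Ω) :
    EqOn (wD l u) (partialDeriv (fun i => l.count i) u) Ω := by
  rw [partialDeriv_eq]
  exact wD_perm hΩ (word_perm l) h

lemma wD_sub {Ω : Set (Euc d)} (hΩ : IsOpen Ω) {u v : Euc d → F} (l : List (Fin d))
    (hu : ContDiffOn ℝ (⊤ : ℕ∞) u Ω) (hv : ContDiffOn ℝ (⊤ : ℕ∞) v Ω) :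
    EqOn (wD l (fun x => u x - v x)) (fun x => wD l u x - wD l v x) Ω := by
  induction l with
  | nil => exact fun _ _ => rfl
  | cons i l ih =>
    refine (pderivDir_congr hΩ _ ih).trans ?_
    intro x hx
    simp only [pderivDir, wD_cons]
    rw [fderiv_fun_sub (cd_diff hΩ (wD_smooth hΩ l hu) hx) (cd_diff hΩ (wD_smooth hΩ l hv) hx)]
    rfl

lemma wD_add {Ω : Set (Euc d)} (hΩ : IsOpen Ω) {u v : Euc d → F} (l : List (Fin d))
    (hu : ContDiffOn ℝ (⊤ : ℕ∞) u Ω) (hv : ContDiffOn ℝ (⊤ : ℕ∞) v Ω) :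
    EqOn (wD l (fun x => u x + v x)) (fun x => wD l u x + wD l v x) Ω := by
  induction l with
  | nil => exact fun _ _ => rfl
  | cons i l ih =>
    refine (pderivDir_congr hΩ _ ih).trans ?_
    intro x hx
    simp only [pderivDir, wD_cons]
    rw [fderiv_fun_add (cd_diff hΩ (wD_smooth hΩ l hu) hx) (cd_diff hΩ (wD_smooth hΩ l hv) hx)]
    rfl

lemma wD_zero (l : List (Fin d)) : wD l (fun _ : Euc d => (0 : F)) = fun _ => 0 := by
  induction l with
  | nil => rfl
  | cons i l ih => rw [wD_cons, ih]; funext x; simp [pderivDir]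

end words

lemma pSemi_le {F : Type} [NormedAddCommGroup F] [NormedSpace ℝ F] {α : Fin d → ℕ}
    {K : Set (Euc d)} {u : Euc d → F} {C : ℝ} (hC : 0 ≤ C)
    (h : ∀ x ∈ K, ‖partialDeriv α u x‖ ≤ C) : pSemi α K u ≤ C := by
  apply Real.sSup_le _ hC
  rintro _ ⟨x, hx, rfl⟩
  exact h x hx

lemma le_pSemi {F : Type} [NormedAddCommGroup F] [NormedSpace ℝ F] {Ω : Set (Euc d)}
    (hΩ : IsOpen Ω) {α : Fin d → ℕ}
    {K : Set (Euc d)} (hK : IsCompact K) (hKΩ : K ⊆ Ω) {u : Euc d → F} 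
    (hu : ContDiffOn ℝ (⊤ : ℕ∞) u Ω) {x} (hx : x ∈ K) :
    ‖partialDeriv α u x‖ ≤ pSemi α K u := by
  have hc : ContinuousOn (fun x => ‖partialDeriv α u x‖) K := by
    rw [partialDeriv_eq]
    exact ((wD_smooth hΩ _ hu).continuousOn.mono hKΩ).norm
  exact le_csSup (hK.bddAbove_image hc) ⟨x, hx, rfl⟩

lemma pSemi_nonneg {F : Type} [NormedAddCommGroup F] [NormedSpace ℝ F] {α : Fin d → ℕ}
    {K : Set (Euc d)} {u : Euc d → F} : 0 ≤ pSemi α K u := by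
  apply Real.sSup_nonneg
  rintro _ ⟨x, hx, rfl⟩
  exact norm_nonneg _


/-- pointwise smallness, equivalent to pSemi bounds -/
lemma ev_pSemi_le_iff {Ω : Set (Euc d)} (hΩ : IsOpen Ω) {α : Fin d → ℕ}
    {K : Set (Euc d)} (hK : IsCompact K) (hKΩ : K ⊆ Ω) {u : ℝ → Euc d → ℂ}
    (hu : ∀ ε ∈ Set.Ioo (0:ℝ) 1, ContDiffOn ℝ (⊤ : ℕ∞) (u ε) Ω) (b : ℝ) :
    (SmallE fun ε => pSemi α K (u ε) ≤ ε ^ b) ↔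
      ∀ᶠ ε in 𝓝[>] (0:ℝ), ∀ x ∈ K, ‖partialDeriv α (u ε) x‖ ≤ ε ^ b := by
  rw [smallE_iff]
  constructor
  · intro h
    filter_upwards [h, ev_Ioo] with ε h1 h2 x hx
    exact (le_pSemi hΩ hK hKΩ (hu ε h2) hx).trans h1
  · intro h
    filter_upwards [h, ev_Ioo] with ε h1 h2
    exact pSemi_le (Real.rpow_nonneg h2.1.le _) h1

lemma partialDeriv_sub {Ω : Set (Euc d)} (hΩ : IsOpen Ω) {u v : Euc d → ℂ} (α : Fin d → ℕ)
    (hu : ContDiffOn ℝ (⊤ : ℕ∞) u Ω) (hv : ContDiffOn ℝ (⊤ : ℕ∞) v Ω) {x} (hx : x ∈ Ω) :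
    partialDeriv α (fun x => u x - v x) x = partialDeriv α u x - partialDeriv α v x := by
  simp only [partialDeriv_eq]
  exact wD_sub hΩ _ hu hv hx

/-- triangle inequality for pointwise closeness -/
lemma ev_tri {Ω : Set (Euc d)} (hΩ : IsOpen Ω) {α : Fin d → ℕ}
    {K : Set (Euc d)} (hKΩ : K ⊆ Ω) {u v w : ℝ → Euc d → ℂ}
    (hu : ∀ ε ∈ Set.Ioo (0:ℝ) 1, ContDiffOn ℝ (⊤ : ℕ∞) (u ε) Ω)
    (hv : ∀ ε ∈ Set.Ioo (0:ℝ) 1, ContDiffOn ℝ (⊤ : ℕ∞) (v ε) Ω)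
    (hw : ∀ ε ∈ Set.Ioo (0:ℝ) 1, ContDiffOn ℝ (⊤ : ℕ∞) (w ε) Ω) {b b' c : ℝ} 
    (hb : c < b) (hb' : c < b')
    (h1 : ∀ᶠ ε in 𝓝[>] (0:ℝ), ∀ x ∈ K, ‖partialDeriv α (fun x => u ε x - v ε x) x‖ ≤ ε ^ b)
    (h2 : ∀ᶠ ε in 𝓝[>] (0:ℝ), ∀ x ∈ K, ‖partialDeriv α (fun x => v ε x - w ε x) x‖ ≤ ε ^ b') :
    ∀ᶠ ε in 𝓝[>] (0:ℝ), ∀ x ∈ K, ‖partialDeriv α (fun x => u ε x - w ε x) x‖ ≤ ε ^ c := by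
  have hlim : ∀ s : ℝ, 0 < s → ∀ᶠ ε in 𝓝[>] (0:ℝ), ε ^ s ≤ 1 / 2 := by
    intro s hs
    have : Tendsto (fun ε : ℝ => ε ^ s) (𝓝[>] 0) (𝓝 0) := by
      have := (Real.continuousAt_rpow_const 0 s (Or.inr hs.le)).tendsto
      rw [Real.zero_rpow hs.ne'] at this
      exact this.mono_left nhdsWithin_le_nhds
    exact this.eventually (eventually_le_nhds (by norm_num))
  filter_upwards [h1, h2, ev_Ioo, hlim _ (sub_pos.2 hb), hlim _ (sub_pos.2 hb')]
    with ε h1 h2 h3 h4 h5 x hx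
  have e1 := h1 x hx
  have e2 := h2 x hx
  rw [partialDeriv_sub hΩ α (hu ε h3) (hv ε h3) (hKΩ hx)] at e1
  rw [partialDeriv_sub hΩ α (hv ε h3) (hw ε h3) (hKΩ hx)] at e2
  rw [partialDeriv_sub hΩ α (hu ε h3) (hw ε h3) (hKΩ hx)]
  have e3 : ε ^ b = ε ^ (b - c) * ε ^ c := by rw [← Real.rpow_add h3.1]; ring_nf
  have e4 : ε ^ b' = ε ^ (b' - c) * ε ^ c := by rw [← Real.rpow_add h3.1]; ring_nf
  have hc := Real.rpow_nonneg h3.1.le c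
  have := norm_sub_le_norm_sub_add_norm_sub (partialDeriv α (u ε) x) (partialDeriv α (v ε) x)
    (partialDeriv α (w ε) x)
  nlinarith

lemma nulRel_iff {Ω : Set (Euc d)} (hΩ : IsOpen Ω) (u v : ModNet Ω) :
    nulRel Ω u v ↔ ∀ K : Set (Euc d), IsCompact K → K ⊆ Ω → ∀ α : Fin d → ℕ, ∀ m : ℕ,
      ∀ᶠ ε in 𝓝[>] (0:ℝ), ∀ x ∈ K,
        ‖partialDeriv α (fun x => u.1 ε x - v.1 ε x) x‖ ≤ ε ^ (m : ℝ) := by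
  have hs : ∀ ε ∈ Set.Ioo (0:ℝ) 1, ContDiffOn ℝ (⊤ : ℕ∞) (fun x => u.1 ε x - v.1 ε x) Ω :=
    fun ε hε => (u.2.1 ε hε).sub (v.2.1 ε hε)
  constructor
  · intro h K hK hKΩ α m
    exact (ev_pSemi_le_iff hΩ hK hKΩ hs _).1 (h.2 K hK hKΩ α m)
  · intro h
    exact ⟨hs, fun K hK hKΩ α m => (ev_pSemi_le_iff hΩ hK hKΩ hs _).2 (h K hK hKΩ α m)⟩

lemma nulRel_equiv {Ω : Set (Euc d)} (hΩ : IsOpen Ω) : Equivalence (nulRel Ω) := by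
  refine ⟨fun u => ?_, fun {u v} h => ?_, fun {u v w} h1 h2 => ?_⟩
  · rw [nulRel_iff hΩ]
    intro K _ _ α m
    filter_upwards [ev_Ioo] with ε hε x hx
    simp only [sub_self, partialDeriv_eq, wD_zero, norm_zero]
    exact Real.rpow_nonneg hε.1.le _
  · rw [nulRel_iff hΩ] at h ⊢
    intro K hK hKΩ α m
    filter_upwards [h K hK hKΩ α m, ev_Ioo] with ε h1 hε x hx
    have := h1 x hx
    rw [partialDeriv_sub hΩ α (u.2.1 ε hε) (v.2.1 ε hε) (hKΩ hx), norm_sub_rev] at this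
    rwa [partialDeriv_sub hΩ α (v.2.1 ε hε) (u.2.1 ε hε) (hKΩ hx)]
  · rw [nulRel_iff hΩ] at h1 h2 ⊢
    intro K hK hKΩ α m
    have hm : (m : ℝ) < ((m + 1 : ℕ) : ℝ) := by push_cast; linarith
    exact ev_tri hΩ hKΩ u.2.1 v.2.1 w.2.1 hm hm (h1 K hK hKΩ α (m+1)) (h2 K hK hKΩ α (m+1))

lemma nulRel_of_mk_eq {Ω : Set (Euc d)} (hΩ : IsOpen Ω) {u v : ModNet Ω}
    (h : Quot.mk (nulRel Ω) u = Quot.mk (nulRel Ω) v) : nulRel Ω u v := by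
  have := Quot.eqvGen_exact h
  rwa [(nulRel_equiv hΩ).eqvGen_iff] at this

lemma sharpNorm_lt {z : ℝ → ℂ} {b r : ℝ} (hr : 0 < r) (hb : -Real.log r < b)
    (h : SmallE fun ε => ‖z ε‖ ≤ ε ^ b) : sharpNorm z < r := by
  unfold sharpNorm
  split_ifs with hv
  · exact hr
  have h1 : (b : EReal) ≤ valuation z := le_sSup ⟨b, h, rfl⟩
  have h2 : b ≤ (valuation z).toReal := by
    have := EReal.toReal_le_toReal h1 (EReal.coe_ne_bot b) hv
    simpa using this
  calc Real.exp (-(valuation z).toReal) < Real.exp (Real.log r) := by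
        apply Real.exp_lt_exp.2; linarith
    _ = r := Real.exp_log hr

lemma exists_of_sharpNorm_lt {z : ℝ → ℂ} {r : ℝ} (hr : 0 < r) 
    (hz : ∃ b : ℝ, SmallE fun ε => ‖z ε‖ ≤ ε ^ b) (h : sharpNorm z < r) :
    ∃ b : ℝ, -Real.log r < b ∧ SmallE fun ε => ‖z ε‖ ≤ ε ^ b := by
  have h1 : ((-Real.log r : ℝ) : EReal) < valuation z := by
    unfold sharpNorm at h
    split_ifs at h with hv
    · rw [hv]; exact EReal.coe_lt_top _
    · obtain ⟨b, hb⟩ := hz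
      have hbot : valuation z ≠ ⊥ := by
        have h1 : (b : EReal) ≤ valuation z := le_sSup ⟨b, hb, rfl⟩
        intro h0
        rw [h0] at h1
        exact EReal.coe_ne_bot b (le_bot_iff.1 h1)
      rw [← EReal.coe_toReal hv hbot]
      rw [EReal.coe_lt_coe_iff]
      have := (Real.lt_log_iff_exp_lt hr).2 h
      linarith
  obtain ⟨_, ⟨b, hb, rfl⟩, h2⟩ := lt_sSup_iff.1 h1
  exact ⟨b, EReal.coe_lt_coe_iff.1 h2, hb⟩

lemma PNormDiff_conv {α : Fin d → ℕ} {K : Set (Euc d)} {g : ℝ → Euc d → ℂ} {b : ℝ} :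
    (SmallE fun ε => ‖((pSemi α K (g ε) : ℝ) : ℂ)‖ ≤ ε ^ b) ↔
    (SmallE fun ε => pSemi α K (g ε) ≤ ε ^ b) := by
  have : ∀ ε, ‖((pSemi α K (g ε) : ℝ) : ℂ)‖ = pSemi α K (g ε) := by
    intro ε
    rw [Complex.norm_real, Real.norm_of_nonneg pSemi_nonneg]
  simp only [this]

lemma moderate_diff {Ω : Set (Euc d)} (hΩ : IsOpen Ω) (u v : ModNet Ω) (α : Fin d → ℕ)
    {K : Set (Euc d)} (hK : IsCompact K) (hKΩ : K ⊆ Ω) :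
    ∃ b : ℝ, ∀ᶠ ε in 𝓝[>] (0:ℝ), ∀ x ∈ K,
        ‖partialDeriv α (fun x => u.1 ε x - v.1 ε x) x‖ ≤ ε ^ b := by
  obtain ⟨N, hN⟩ := u.2.2 K hK hKΩ α
  obtain ⟨N', hN'⟩ := v.2.2 K hK hKΩ α
  rw [ev_pSemi_le_iff hΩ hK hKΩ u.2.1] at hN
  rw [ev_pSemi_le_iff hΩ hK hKΩ v.2.1] at hN'
  refine ⟨-(N : ℝ) - N' - 1, ?_⟩
  filter_upwards [hN, hN', ev_Ioo, ev_absorb 2 (-(N : ℝ) - N' - 1) (-(N : ℝ) - N') (by linarith)]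
    with ε h1 h2 hε h3 x hx
  rw [partialDeriv_sub hΩ α (u.2.1 ε hε) (v.2.1 ε hε) (hKΩ hx)]
  refine (norm_sub_le _ _).trans (le_trans ?_ h3)
  have e1 : ε ^ (-(N:ℝ)) ≤ ε ^ (-(N:ℝ) - N') :=
    Real.rpow_le_rpow_of_exponent_ge hε.1 hε.2.le (by linarith [(Nat.cast_nonneg N' : (0:ℝ) ≤ N')])
  have e2 : ε ^ (-(N':ℝ)) ≤ ε ^ (-(N:ℝ) - N') :=
    Real.rpow_le_rpow_of_exponent_ge hε.1 hε.2.le (by linarith [(Nat.cast_nonneg N : (0:ℝ) ≤ N)])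
  linarith [h1 x hx, h2 x hx]

/-- the key fact about subbasic sets -/
lemma subbasic {Ω : Set (Euc d)} (hΩ : IsOpen Ω) (u w : Colombeau Ω) (α : Fin d → ℕ)
    {K : Set (Euc d)} (hK : IsCompact K) (hKΩ : K ⊆ Ω) {r : ℝ} (hr : 0 < r)
    (h : PNormDiff Ω α K u w < r) :
    ∃ m : ℕ, ∀ v : Colombeau Ω, (∀ᶠ ε in 𝓝[>] (0:ℝ), ∀ x ∈ K,
        ‖partialDeriv α (fun x => (Quot.out w).1 ε x - (Quot.out v).1 ε x) x‖ ≤ ε ^ (m : ℝ)) →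
        PNormDiff Ω α K u v < r := by
  have hs : ∀ u v : ModNet Ω, ∀ ε ∈ Set.Ioo (0:ℝ) 1,
      ContDiffOn ℝ (⊤ : ℕ∞) (fun x => u.1 ε x - v.1 ε x) Ω :=
    fun u v ε hε => (u.2.1 ε hε).sub (v.2.1 ε hε)
  obtain ⟨b, hb, hb2⟩ := exists_of_sharpNorm_lt hr (by
    obtain ⟨b, hb⟩ := moderate_diff hΩ (Quot.out u) (Quot.out w) α hK hKΩ
    exact ⟨b, PNormDiff_conv.2 ((ev_pSemi_le_iff hΩ hK hKΩ (hs _ _) _).2 hb)⟩) h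
  have hb3 := (ev_pSemi_le_iff hΩ hK hKΩ (hs _ _) _).1 (PNormDiff_conv.1 hb2)
  obtain ⟨c, hc, hcb⟩ := exists_between hb
  obtain ⟨m, hm⟩ := exists_nat_gt c
  refine ⟨m, fun v hv => ?_⟩
  apply sharpNorm_lt hr hc
  exact PNormDiff_conv.2 ((ev_pSemi_le_iff hΩ hK hKΩ (hs _ _) _).2
    (ev_tri hΩ hKΩ (Quot.out u).2.1 (Quot.out w).2.1 (Quot.out v).2.1 hcb hm hb3 hv))


/-- word moderate nets -/
def WMod (Ω : Set (Euc d)) (u : ℝ → Euc d → ℂ) : Prop :=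
  (∀ ε ∈ Set.Ioo (0:ℝ) 1, ContDiffOn ℝ (⊤ : ℕ∞) (u ε) Ω) ∧
  ∀ K : Set (Euc d), IsCompact K → K ⊆ Ω → ∀ l : List (Fin d),
    ∃ N : ℕ, ∀ᶠ ε in 𝓝[>] (0:ℝ), ∀ x ∈ K, ‖wD l (u ε) x‖ ≤ ε ^ (-(N : ℝ))

lemma WMod_of_moderate {Ω : Set (Euc d)} (hΩ : IsOpen Ω) {u : ℝ → Euc d → ℂ}
    (h : Moderate Ω u) : WMod Ω u := by
  refine ⟨h.1, fun K hK hKΩ l => ?_⟩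
  obtain ⟨N, hN⟩ := h.2 K hK hKΩ (fun i => l.count i)
  rw [ev_pSemi_le_iff hΩ hK hKΩ h.1] at hN
  refine ⟨N, ?_⟩
  filter_upwards [hN, ev_Ioo] with ε h1 hε x hx
  rw [wD_eq_partialDeriv hΩ l (h.1 ε hε) (hKΩ hx)]
  exact h1 x hx

lemma WMod_const {Ω : Set (Euc d)} (hΩ : IsOpen Ω) {χ : Euc d → ℂ}
    (h : ContDiffOn ℝ (⊤ : ℕ∞) χ Ω) : WMod Ω (fun _ => χ) := by
  refine ⟨fun _ _ => h, fun K hK hKΩ l => ⟨1, ?_⟩⟩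
  obtain ⟨C, hC⟩ := hK.exists_bound_of_continuousOn ((wD_smooth hΩ l h).continuousOn.mono hKΩ)
  filter_upwards [ev_absorb C (-((1:ℕ) : ℝ)) 0 (by simp)] with ε h1 x hx
  rw [Real.rpow_zero, mul_one] at h1
  exact (hC x hx).trans h1

lemma WMod_pderiv {Ω : Set (Euc d)} (hΩ : IsOpen Ω) {u : ℝ → Euc d → ℂ}
    (h : WMod Ω u) (i : Fin d) :
    WMod Ω (fun ε => pderivDir (EuclideanSpace.single i (1 : ℝ)) (u ε)) := by
  refine ⟨fun ε hε => pderivDir_smooth hΩ _ (h.1 ε hε), fun K hK hKΩ l => ?_⟩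
  obtain ⟨N, hN⟩ := h.2 K hK hKΩ (l ++ [i])
  refine ⟨N, ?_⟩
  filter_upwards [hN] with ε h1 x hx
  have := h1 x hx
  rw [wD_append] at this
  exact this

lemma bd_mul {K : Set (Euc d)} {u v w : ℝ → Euc d → ℂ}
    (hu : ∃ N : ℕ, ∀ᶠ ε in 𝓝[>] (0:ℝ), ∀ x ∈ K, ‖u ε x‖ ≤ ε ^ (-(N : ℝ)))
    (hv : ∃ N : ℕ, ∀ᶠ ε in 𝓝[>] (0:ℝ), ∀ x ∈ K, ‖v ε x‖ ≤ ε ^ (-(N : ℝ)))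
    (hw : ∀ᶠ ε in 𝓝[>] (0:ℝ), ∀ x ∈ K, w ε x = u ε x * v ε x) :
    ∃ N : ℕ, ∀ᶠ ε in 𝓝[>] (0:ℝ), ∀ x ∈ K, ‖w ε x‖ ≤ ε ^ (-(N : ℝ)) := by
  obtain ⟨N, hN⟩ := hu
  obtain ⟨M, hM⟩ := hv
  refine ⟨N + M, ?_⟩
  filter_upwards [hN, hM, hw, ev_Ioo] with ε h1 h2 h3 hε x hx
  rw [h3 x hx, norm_mul]
  have : ε ^ (-((N + M : ℕ) : ℝ)) = ε ^ (-(N:ℝ)) * ε ^ (-(M:ℝ)) := by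
    rw [← Real.rpow_add hε.1]; push_cast; ring_nf
  rw [this]
  exact mul_le_mul (h1 x hx) (h2 x hx) (norm_nonneg _) (Real.rpow_nonneg hε.1.le _)

lemma bd_add {K : Set (Euc d)} {u v w : ℝ → Euc d → ℂ}
    (hu : ∃ N : ℕ, ∀ᶠ ε in 𝓝[>] (0:ℝ), ∀ x ∈ K, ‖u ε x‖ ≤ ε ^ (-(N : ℝ)))
    (hv : ∃ N : ℕ, ∀ᶠ ε in 𝓝[>] (0:ℝ), ∀ x ∈ K, ‖v ε x‖ ≤ ε ^ (-(N : ℝ)))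
    (hw : ∀ᶠ ε in 𝓝[>] (0:ℝ), ∀ x ∈ K, w ε x = u ε x + v ε x) :
    ∃ N : ℕ, ∀ᶠ ε in 𝓝[>] (0:ℝ), ∀ x ∈ K, ‖w ε x‖ ≤ ε ^ (-(N : ℝ)) := by
  obtain ⟨N, hN⟩ := hu
  obtain ⟨M, hM⟩ := hv
  refine ⟨N + M + 1, ?_⟩
  filter_upwards [hN, hM, hw, ev_Ioo, ev_absorb 2 (-((N + M + 1 : ℕ) : ℝ)) (-(N:ℝ) - M)
    (by push_cast; linarith)] with ε h1 h2 h3 hε h4 x hx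
  rw [h3 x hx]
  refine (norm_add_le _ _).trans (le_trans ?_ h4)
  have e1 : ε ^ (-(N:ℝ)) ≤ ε ^ (-(N:ℝ) - M) :=
    Real.rpow_le_rpow_of_exponent_ge hε.1 hε.2.le (by linarith [(Nat.cast_nonneg M : (0:ℝ) ≤ M)])
  have e2 : ε ^ (-(M:ℝ)) ≤ ε ^ (-(N:ℝ) - M) :=
    Real.rpow_le_rpow_of_exponent_ge hε.1 hε.2.le (by linarith [(Nat.cast_nonneg N : (0:ℝ) ≤ N)])
  linarith [h1 x hx, h2 x hx]

lemma WMod_mul {Ω : Set (Euc d)} (hΩ : IsOpen Ω) {u v : ℝ → Euc d → ℂ}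
    (hu : WMod Ω u) (hv : WMod Ω v) : WMod Ω (fun ε x => u ε x * v ε x) := by
  refine ⟨fun ε hε => (hu.1 ε hε).mul (hv.1 ε hε), fun K hK hKΩ l => ?_⟩
  induction l using List.reverseRecOn generalizing u v with
  | nil => exact bd_mul (hu.2 K hK hKΩ []) (hv.2 K hK hKΩ []) (Eventually.of_forall fun _ _ _ => rfl)
  | append_singleton l i ih =>
    refine bd_add (ih (WMod_pderiv hΩ hu i) hv) (ih hu (WMod_pderiv hΩ hv i)) ?_
    filter_upwards [ev_Ioo] with ε hε x hx
    rw [wD_append]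
    have hpu := pderivDir_smooth hΩ (EuclideanSpace.single i (1 : ℝ)) (hu.1 ε hε)
    have hpv := pderivDir_smooth hΩ (EuclideanSpace.single i (1 : ℝ)) (hv.1 ε hε)
    refine Eq.trans ?_ (wD_add hΩ l (hpu.mul (hv.1 ε hε)) ((hu.1 ε hε).mul hpv) (hKΩ hx))
    refine wD_congr hΩ l ?_ (hKΩ hx)
    intro y hy
    simp only [wD_cons, wD_nil, pderivDir]
    rw [fderiv_fun_mul (cd_diff hΩ (hu.1 ε hε) hy) (cd_diff hΩ (hv.1 ε hε) hy)]
    simp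
    ring


lemma wD_contDiff {F : Type} [NormedAddCommGroup F] [NormedSpace ℝ F] {u : Euc d → F}
    (l : List (Fin d)) (h : ContDiff ℝ (⊤ : ℕ∞) u) : ContDiff ℝ (⊤ : ℕ∞) (wD l u) := by
  rw [← contDiffOn_univ] at h ⊢
  exact wD_smooth isOpen_univ l h

lemma wD_compactSupp {F : Type} [NormedAddCommGroup F] [NormedSpace ℝ F] {u : Euc d → F}
    (l : List (Fin d)) (h : HasCompactSupport u) : HasCompactSupport (wD l u) := by
  induction l with
  | nil => exact h
  | cons i l ih => exact ih.fderiv_apply ℝ _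

lemma wD_convolution {E E' F : Type} [NormedAddCommGroup E] [NormedSpace ℝ E]
    [NormedAddCommGroup E'] [NormedSpace ℝ E'] [NormedAddCommGroup F] [NormedSpace ℝ F]
    (L : E →L[ℝ] E' →L[ℝ] F) {f : Euc d → E} {g : Euc d → E'}
    (hf : LocallyIntegrable f volume) (hcg : HasCompactSupport g)
    (hg : ContDiff ℝ (⊤ : ℕ∞) g) (l : List (Fin d)) :
    wD l (convolution f g L volume) = convolution f (wD l g) L volume := by
  induction l with
  | nil => rfl
  | cons i l ih =>
    rw [wD_cons, ih, wD_cons]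
    funext x
    have h1 : ContDiff ℝ 1 (wD l g) := (wD_contDiff l hg).of_le (by exact_mod_cast le_top)
    have hc := wD_compactSupp l hcg
    simp only [pderivDir]
    rw [(hc.hasFDerivAt_convolution_right L hf h1 x).fderiv]
    rw [convolution_precompR_apply L hf (hc.fderiv ℝ) (h1.continuous_fderiv one_ne_zero)]
    rfl

lemma wD_mollify {ψ : Euc d → ℝ} (hψ : ContDiff ℝ (⊤ : ℕ∞) ψ) (δ : ℝ) (l : List (Fin d)) :
    wD l (mollify ψ δ) = fun x => ((δ ^ d)⁻¹ * (δ ^ l.length)⁻¹) * wD l ψ (δ⁻¹ • x) := by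
  induction l with
  | nil => funext x; simp [mollify]
  | cons i l ih =>
    rw [wD_cons, ih, wD_cons]
    funext x
    have hd : DifferentiableAt ℝ (fun x => wD l ψ (δ⁻¹ • x)) x := by
      have h1 : Differentiable ℝ (wD l ψ) := (wD_contDiff l hψ).differentiable (by simp)
      fun_prop
    simp only [pderivDir]
    rw [fderiv_const_mul hd, fderiv_comp_smul]
    simp only [smul_apply, smul_eq_mul, List.length_cons, pow_succ, mul_inv]
    ring

/-- properties of the basic mollifier -/
structure IsMol (ψ : Euc d → ℝ) : Prop where
  smooth : ContDiff ℝ (⊤ : ℕ∞) ψ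
  comp : HasCompactSupport ψ
  nonneg : ∀ x, 0 ≤ ψ x
  int : ∫ x, ψ x = 1
  supp : Function.support ψ ⊆ ball 0 1

lemma exists_isMol : ∃ ψ : Euc d → ℝ, IsMol ψ := by
  let φ : ContDiffBump (0 : Euc d) := ⟨1/2, 1, by norm_num, by norm_num⟩
  exact ⟨φ.normed volume, φ.contDiff_normed, φ.hasCompactSupport_normed, φ.nonneg_normed,
    φ.integral_normed, φ.support_normed_eq.subset⟩

lemma mollify_contDiff {ψ : Euc d → ℝ} (hψ : IsMol ψ) (δ : ℝ) :
    ContDiff ℝ (⊤ : ℕ∞) (mollify ψ δ) :=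
  contDiff_const.mul (hψ.smooth.comp (contDiff_const_smul _))

lemma mollify_supp {ψ : Euc d → ℝ} (hψ : IsMol ψ) {δ : ℝ} (hδ : 0 < δ) :
    Function.support (mollify ψ δ) ⊆ ball 0 δ := by
  intro x hx
  have h1 : ψ (δ⁻¹ • x) ≠ 0 := by
    intro h; apply hx; simp [mollify, h]
  have := hψ.supp h1
  rw [mem_ball_zero_iff, norm_smul, norm_inv, Real.norm_of_nonneg hδ.le] at this
  rw [mem_ball_zero_iff]
  rwa [inv_mul_lt_iff₀ hδ, mul_one] at this

lemma mollify_comp {ψ : Euc d → ℝ} (hψ : IsMol ψ) {δ : ℝ} (hδ : 0 < δ) :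
    HasCompactSupport (mollify ψ δ) :=
  HasCompactSupport.of_support_subset_isCompact (isCompact_closedBall 0 δ)
    ((mollify_supp hψ hδ).trans ball_subset_closedBall)

lemma mollify_int {ψ : Euc d → ℝ} (hψ : IsMol ψ) {δ : ℝ} (hδ : 0 < δ) :
    ∫ x, mollify ψ δ x = 1 := by
  unfold mollify
  rw [integral_const_mul, Measure.integral_comp_inv_smul_of_nonneg volume ψ hδ.le, hψ.int]
  simp [hδ.ne']

/-- smoothing -/
def smo (ψ : Euc d → ℝ) (δ : ℝ) (f : Euc d → ℂ) : Euc d → ℂ :=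
  convolution f (mollify ψ δ) (ContinuousLinearMap.lsmul ℝ ℝ).flip volume

lemma smo_contDiff {ψ : Euc d → ℝ} (hψ : IsMol ψ) {δ : ℝ} (hδ : 0 < δ) {f : Euc d → ℂ}
    (hf : Continuous f) : ContDiff ℝ (⊤ : ℕ∞) (smo ψ δ f) :=
  (mollify_comp hψ hδ).contDiff_convolution_right _ hf.locallyIntegrable (mollify_contDiff hψ δ)

/-- first bound -/
lemma smo_bound {ψ : Euc d → ℝ} (hψ : IsMol ψ) {L : Set (Euc d)} (hL : IsCompact L)
    (l : List (Fin d)) : ∃ C : ℝ, 0 ≤ C ∧ ∀ δ : ℝ, 0 < δ → ∀ (f : Euc d → ℂ) (B : ℝ), Continuous f →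
      (∀ x, ‖f x‖ ≤ B) → (∀ x ∉ L, f x = 0) → ∀ x,
      ‖wD l (smo ψ δ f) x‖ ≤ C * (δ ^ d)⁻¹ * (δ ^ l.length)⁻¹ * B := by
  obtain ⟨C, hC⟩ := (wD_compactSupp l hψ.comp).exists_bound_of_continuous
    (wD_contDiff l hψ.smooth).continuous
  have hC0 : 0 ≤ C := (norm_nonneg _).trans (hC 0)
  refine ⟨C * volume.real L, by positivity, fun δ hδ f B hf hB hfL x => ?_⟩
  rw [smo, wD_convolution _ hf.locallyIntegrable (mollify_comp hψ hδ) (mollify_contDiff hψ δ),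
    convolution_def, ← setIntegral_eq_integral_of_forall_compl_eq_zero (s := L)
      (fun x hx => by rw [hfL x hx]; simp)]
  refine (norm_setIntegral_le_of_norm_le_const (C := (δ ^ d)⁻¹ * (δ ^ l.length)⁻¹ * C * B)
    hL.measure_lt_top ?_).trans (le_of_eq (by ring))
  intro t _
  rw [ContinuousLinearMap.flip_apply, ContinuousLinearMap.lsmul_apply, norm_smul]
  refine mul_le_mul ?_ (hB t) (norm_nonneg _) (by positivity)
  rw [wD_mollify hψ.smooth]
  simp only [norm_mul]
  rw [Real.norm_of_nonneg (by positivity : 0 ≤ (δ ^ d)⁻¹),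
    Real.norm_of_nonneg (by positivity : 0 ≤ (δ ^ l.length)⁻¹)]
  gcongr
  exact hC _

lemma norm_fderiv_le {h : Euc d → ℂ} {x : Euc d} {B : ℝ} (hB0 : 0 ≤ B)
    (hB : ∀ i, ‖pderivDir (EuclideanSpace.single i (1 : ℝ)) h x‖ ≤ B) :
    ‖fderiv ℝ h x‖ ≤ d * B := by
  refine ContinuousLinearMap.opNorm_le_bound _ (by positivity) fun v => ?_
  have hv : v = ∑ i, v i • EuclideanSpace.single i (1 : ℝ) := by
    ext j
    simp [Finset.sum_apply, Pi.single_apply]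
  conv_lhs => rw [hv]
  rw [map_sum]
  refine (norm_sum_le _ _).trans ?_
  calc ∑ i, ‖fderiv ℝ h x (v i • EuclideanSpace.single i (1 : ℝ))‖ ≤ ∑ i : Fin d, B * ‖v‖ := by
        apply Finset.sum_le_sum
        intro i _
        rw [map_smul, norm_smul, mul_comm]
        exact mul_le_mul (hB i) (PiLp.norm_apply_le v i) (norm_nonneg _) hB0
    _ = d * B * ‖v‖ := by simp; ring

/-- approximation bound -/
lemma smo_approx {ψ : Euc d → ℝ} (hψ : IsMol ψ) {δ : ℝ} (hδ : 0 < δ) {f : Euc d → ℂ}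
    (hf : ContDiff ℝ (⊤ : ℕ∞) f) (hcf : HasCompactSupport f) (l : List (Fin d)) {B : ℝ}
    (hB0 : 0 ≤ B) (hB : ∀ i x, ‖wD (i :: l) f x‖ ≤ B) (x : Euc d) :
    ‖wD l (smo ψ δ f) x - wD l f x‖ ≤ d * B * δ := by
  have hsm := wD_contDiff l hf
  rw [smo, convolution_flip, wD_convolution _ (mollify_contDiff hψ δ).continuous.locallyIntegrable
    hcf hf, ← dist_eq_norm]
  refine dist_convolution_le (by positivity) (mollify_supp hψ hδ) ?_ (mollify_int hψ hδ)
    hsm.continuous.aestronglyMeasurable ?_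
  · intro y
    exact mul_nonneg (by positivity) (hψ.nonneg _)
  · intro y hy
    rw [dist_eq_norm]
    refine (convex_univ.norm_image_sub_le_of_norm_fderiv_le (𝕜 := ℝ) (C := d * B)
      (fun z _ => hsm.differentiable (by simp) z) (fun z _ => norm_fderiv_le hB0 fun i => hB i z)
      (mem_univ x) (mem_univ y)).trans ?_
    rw [mem_ball, dist_eq_norm] at hy
    gcongr

lemma smo_zero {ψ : Euc d → ℝ} (hψ : IsMol ψ) {δ : ℝ} (hδ : 0 < δ) {f : Euc d → ℂ}
    {L : Set (Euc d)} (hfL : ∀ x ∉ L, f x = 0) {x : Euc d} (hx : x ∉ cthickening δ L) :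
    smo ψ δ f x = 0 := by
  rw [smo, convolution_def]
  refine integral_eq_zero_of_ae (Eventually.of_forall fun t => ?_)
  by_cases ht : t ∈ L
  · have : mollify ψ δ (x - t) = 0 := by
      by_contra h
      have := mollify_supp hψ hδ h
      rw [mem_ball_zero_iff, ← dist_eq_norm] at this
      exact hx (mem_cthickening_of_dist_le x t δ L ht this.le)
    simp [this]
  · simp [hfL t ht]


open scoped Manifold ContDiff in
lemma exists_cutoff {K L : Set (Euc d)} (hK : IsCompact K) (hKL : K ⊆ interior L) :
    ∃ χ : Euc d → ℂ, ContDiff ℝ (⊤ : ℕ∞) χ ∧ (∀ᶠ x in 𝓝ˢ K, χ x = 1) ∧ ∀ x ∉ L, χ x = 0 := by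
  obtain ⟨f, h1, h2, _⟩ := exists_contMDiffMap_one_nhds_of_subset_interior (n := (⊤ : ℕ∞))
    𝓘(ℝ, Euc d) hK.isClosed hKL
  refine ⟨fun x => (f x : ℂ), ?_, ?_, ?_⟩
  · exact Complex.ofRealCLM.contDiff.comp f.contMDiff.contDiff
  · filter_upwards [h1] with x hx
    simp [hx]
  · intro x hx
    simp [h2 x hx]

lemma core {Ω : Set (Euc d)} (hΩ : IsOpen Ω) (w : ModNet Ω) {K : Set (Euc d)}
    (hK : IsCompact K) (hKΩ : K ⊆ Ω) (A : Set (Fin d → ℕ)) (hA : A.Finite) (m : ℕ) :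
    ∃ v : ModNet Ω, (∃ K' : Set (Euc d), IsCompact K' ∧ K' ⊆ Ω ∧ Negligible (Ω \ K') v.1) ∧
      (∃ N : ℕ, ∀ K : Set (Euc d), IsCompact K → K ⊆ Ω → ∀ k : ℕ,
            SmallE fun ε => pSemiK k K (v.1 ε) ≤ ε ^ (-(N : ℝ) * k - N)) ∧
      ∀ α ∈ A, ∀ᶠ ε in 𝓝[>] (0:ℝ), ∀ x ∈ K,
        ‖partialDeriv α (fun x => w.1 ε x - v.1 ε x) x‖ ≤ ε ^ (m : ℝ) := by
  obtain ⟨L, hL, hKL, hLΩ⟩ := exists_compact_between hK hΩ hKΩ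
  obtain ⟨χ, hχ, hχ1, hχ0⟩ := exists_cutoff hK hKL
  obtain ⟨η, hη, hηΩ⟩ := hL.exists_cthickening_subset_open hΩ hLΩ
  obtain ⟨ψ, hψ⟩ := exists_isMol (d := d)
  set f : ℝ → Euc d → ℂ := fun ε x => χ x * w.1 ε x with hf
  have hfL : ∀ ε, ∀ x ∉ L, f ε x = 0 := fun ε x hx => by simp [hf, hχ0 x hx]
  have hLo : IsOpen Lᶜ := hL.isClosed.isOpen_compl
  have hfsm : ∀ ε ∈ Set.Ioo (0:ℝ) 1, ContDiff ℝ (⊤ : ℕ∞) (f ε) := by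
    intro ε hε
    rw [contDiff_iff_contDiffAt]
    intro x
    by_cases hx : x ∈ L
    · exact hχ.contDiffAt.mul ((w.2.1 ε hε).contDiffAt (hΩ.mem_nhds (hLΩ hx)))
    · have : f ε =ᶠ[𝓝 x] fun _ => 0 := by
        filter_upwards [hLo.mem_nhds hx] with y hy using hfL ε y hy
      exact contDiffAt_const.congr_of_eventuallyEq this
  have hfc : ∀ ε, HasCompactSupport (f ε) := fun ε =>
    HasCompactSupport.of_support_subset_isCompact hL fun x hx => by
      by_contra h
      exact hx (hfL ε x h)
  have hW : WMod Ω f := WMod_mul hΩ (WMod_const hΩ hχ.contDiffOn) (WMod_of_moderate hΩ w.2)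
  have hglob : ∀ l : List (Fin d), ∃ N : ℕ, ∀ᶠ ε in 𝓝[>] (0:ℝ), ∀ x,
      ‖wD l (f ε) x‖ ≤ ε ^ (-(N : ℝ)) := by
    intro l
    obtain ⟨N, hN⟩ := hW.2 L hL hLΩ l
    refine ⟨N, ?_⟩
    filter_upwards [hN, ev_Ioo] with ε h1 hε x
    by_cases hx : x ∈ L
    · exact h1 x hx
    · have : wD l (f ε) x = wD l (fun _ => 0) x :=
        wD_congr hLo l (fun y hy => hfL ε y hy) hx
      rw [this, wD_zero, norm_zero]
      exact Real.rpow_nonneg hε.1.le _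
  choose Nf hNf using hglob
  obtain ⟨N1, hN1⟩ : ∃ N1 : ℕ, ∀ α ∈ A, ∀ i, Nf (i :: word α) ≤ N1 := by
    refine ⟨hA.toFinset.sup fun α => Finset.univ.sup fun i => Nf (i :: word α), ?_⟩
    intro α hα i
    exact (Finset.le_sup (f := fun i => Nf (i :: word α)) (Finset.mem_univ i)).trans
      (Finset.le_sup (f := fun α => Finset.univ.sup fun i => Nf (i :: word α))
        (hA.mem_toFinset.2 hα))
  set M : ℕ := m + N1 + 1 with hM
  set v : ℝ → Euc d → ℂ := fun ε => smo ψ (ε ^ M) (f ε) with hv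
  set N : ℕ := M * d + Nf [] + 1 + M with hN
  have hvsm : ∀ ε ∈ Set.Ioo (0:ℝ) 1, ContDiff ℝ (⊤ : ℕ∞) (v ε) := fun ε hε =>
    smo_contDiff hψ (pow_pos hε.1 _) (hfsm ε hε).continuous
  have hb : ∀ l : List (Fin d), ∀ᶠ ε in 𝓝[>] (0:ℝ), ∀ x,
      ‖wD l (v ε) x‖ ≤ ε ^ (-(N : ℝ) * (l.length : ℝ) - N) := by
    intro l
    obtain ⟨C, hC0, hC⟩ := smo_bound hψ hL l
    filter_upwards [hNf [], ev_Ioo, ev_absorb C (-(N : ℝ) * (l.length : ℝ) - N)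
      (-((M * d : ℕ) : ℝ) + -((M * l.length : ℕ) : ℝ) + -(Nf [] : ℝ)) (by
        have h1 : (M : ℝ) * l.length ≤ N * l.length := by
          gcongr
          omega
        have h2 : (N : ℝ) = M * d + Nf [] + 1 + M := by rw [hN]; push_cast; ring
        have h3 : (0 : ℝ) ≤ M := Nat.cast_nonneg _
        push_cast
        linarith)] with ε h1 hε h2 x
    refine (hC (ε ^ M) (pow_pos hε.1 _) (f ε) _ (hfsm ε hε).continuous h1 (hfL ε) x).trans
      (le_trans (le_of_eq ?_) h2)
    rw [Real.rpow_add hε.1, Real.rpow_add hε.1]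
    simp only [Real.rpow_neg hε.1.le, Real.rpow_natCast, pow_mul]
    ring
  have hmod : Moderate Ω v := by
    refine ⟨fun ε hε => (hvsm ε hε).contDiffOn, fun K hK hKΩ α => ⟨N * (word α).length + N, ?_⟩⟩
    rw [smallE_iff]
    filter_upwards [hb (word α), ev_Ioo] with ε h1 hε
    refine pSemi_le (Real.rpow_nonneg hε.1.le _) fun x _ => ?_
    rw [partialDeriv_eq]
    refine (h1 x).trans (le_of_eq ?_)
    congr 1
    push_cast
    ring
  refine ⟨⟨v, hmod⟩, ⟨cthickening η L, hL.cthickening, hηΩ, ?_⟩, ⟨N, ?_⟩, ?_⟩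
  · refine ⟨fun ε hε => (hvsm ε hε).contDiffOn, fun K hK hKΩ α n => ?_⟩
    rw [smallE_iff]
    have hη' : ∀ᶠ ε in 𝓝[>] (0:ℝ), ε < η := nhdsWithin_le_nhds (Iio_mem_nhds hη)
    filter_upwards [ev_Ioo, hη'] with ε hε hεη
    refine pSemi_le (Real.rpow_nonneg hε.1.le _) fun x hx => ?_
    have hz : EqOn (v ε) (fun _ => 0) (cthickening η L)ᶜ := by
      intro y hy
      refine smo_zero hψ (pow_pos hε.1 _) (hfL ε) fun h => hy (cthickening_mono ?_ L h)
      refine le_trans ?_ hεη.le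
      exact pow_le_of_le_one hε.1.le hε.2.le (by omega)
    have := wD_congr (isClosed_cthickening.isOpen_compl) (word α) hz (hKΩ hx).2
    rw [partialDeriv_eq, this, wD_zero, norm_zero]
    exact Real.rpow_nonneg hε.1.le _
  · intro K hK hKΩ k
    rw [smallE_iff]
    have : ∀ᶠ ε in 𝓝[>] (0:ℝ), ∀ α ∈ Finset.piAntidiag (Finset.univ : Finset (Fin d)) k, ∀ x,
        ‖wD (word α) (v ε) x‖ ≤ ε ^ (-(N : ℝ) * ((word α).length : ℝ) - N) := by
      rw [Filter.eventually_all_finset]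
      intro α _
      exact hb _
    filter_upwards [this, ev_Ioo] with ε h1 hε
    refine Real.sSup_le ?_ (Real.rpow_nonneg hε.1.le _)
    rintro _ ⟨α, hα, rfl⟩
    refine pSemi_le (Real.rpow_nonneg hε.1.le _) fun x _ => ?_
    have := h1 α (by simp [Finset.mem_piAntidiag, hα]) x
    rw [word_length, hα] at this
    rw [partialDeriv_eq]
    exact this
  · intro α hα
    have h1 : ∀ᶠ ε in 𝓝[>] (0:ℝ), ∀ i, ∀ x,
        ‖wD (i :: word α) (f ε) x‖ ≤ ε ^ (-(Nf (i :: word α) : ℝ)) := by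
      rw [Filter.eventually_all]
      intro i
      exact hNf _
    filter_upwards [h1, ev_Ioo, ev_absorb d m (M - N1) (by rw [hM]; push_cast; linarith)]
      with ε h2 hε h3 x hx
    have hB : ∀ i x, ‖wD (i :: word α) (f ε) x‖ ≤ ε ^ (-(N1 : ℝ)) := by
      intro i x
      refine (h2 i x).trans (Real.rpow_le_rpow_of_exponent_ge hε.1 hε.2.le ?_)
      have : (Nf (i :: word α) : ℝ) ≤ N1 := by exact_mod_cast hN1 α hα i
      linarith
    have h4 := smo_approx hψ (pow_pos hε.1 M) (hfsm ε hε) (hfc ε) (word α)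
      (Real.rpow_nonneg hε.1.le _) hB x
    rw [partialDeriv_sub hΩ α (w.2.1 ε hε) (hvsm ε hε).contDiffOn (hKΩ hx)]
    obtain ⟨U, hU, hKU, hU1⟩ := eventually_nhdsSet_iff_exists.1 hχ1
    have h5 : wD (word α) (f ε) x = wD (word α) (w.1 ε) x :=
      wD_congr hU (word α) (fun y hy => by simp [hf, hU1 y hy]) (hKU hx)
    rw [h5, norm_sub_rev] at h4
    rw [partialDeriv_eq, partialDeriv_eq]
    refine h4.trans (le_trans (le_of_eq ?_) h3)
    rw [sub_eq_neg_add, Real.rpow_add hε.1, Real.rpow_natCast]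
    ring

/-- the set 𝒜 of compactly supported generalized functions with
uniform growth ε^{-Nk-N} of the k-th seminorms is dense in 𝒢(Ω). -/
theorem Aclass_dense {d : ℕ} (Ω : Set (Euc d)) (hΩ : IsOpen Ω) :
    @Dense (Colombeau Ω) (sharpTopology Ω)
      {u : Colombeau Ω | ∃ v : ModNet Ω, Quot.mk (nulRel Ω) v = u ∧
        u ∈ GCompact Ω ∧ ∃ N : ℕ,
          ∀ K : Set (Euc d), IsCompact K → K ⊆ Ω → ∀ k : ℕ,
            SmallE fun ε => pSemiK k K (v.1 ε) ≤ ε ^ (-(N : ℝ) * k - N)} := by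
  letI : TopologicalSpace (Colombeau Ω) := sharpTopology Ω
  have hbasis := TopologicalSpace.isTopologicalBasis_of_subbasis
    (t := sharpTopology Ω) (s := {S | ∃ (u : Colombeau Ω) (α : Fin d → ℕ) (K : Set (Euc d)) (r : ℝ),
      IsCompact K ∧ K ⊆ Ω ∧ 0 < r ∧ S = {v | PNormDiff Ω α K u v < r}}) rfl
  rw [hbasis.dense_iff]
  rintro _ ⟨G, ⟨hGf, hGs⟩, rfl⟩ ⟨w, hw⟩
  have key : ∀ S ∈ G, ∃ (α : Fin d → ℕ) (K : Set (Euc d)) (m : ℕ), IsCompact K ∧ K ⊆ Ω ∧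
      ∀ v : Colombeau Ω, (∀ᶠ ε in 𝓝[>] (0:ℝ), ∀ x ∈ K,
        ‖partialDeriv α (fun x => (Quot.out w).1 ε x - (Quot.out v).1 ε x) x‖ ≤ ε ^ (m : ℝ)) →
        v ∈ S := by
    intro S hS
    obtain ⟨u, α, K, r, hK, hKΩ, hr, rfl⟩ := hGs hS
    obtain ⟨m, hm⟩ := subbasic hΩ u w α hK hKΩ hr (hw _ hS)
    exact ⟨α, K, m, hK, hKΩ, hm⟩
  choose! α K m hK hKΩ hm using key
  obtain ⟨m', hm'⟩ : ∃ m' : ℕ, ∀ S ∈ G, m S < m' := by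
    refine ⟨hGf.toFinset.sup m + 1, fun S hS => ?_⟩
    exact Nat.lt_succ_of_le (Finset.le_sup (hGf.mem_toFinset.2 hS))
  obtain ⟨v, ⟨K', hK', hK'Ω, hneg⟩, hA, happ⟩ := core hΩ (Quot.out w)
    (hGf.isCompact_biUnion hK) (iUnion₂_subset hKΩ) (α '' G) (hGf.image α) m'
  refine ⟨Quot.mk _ v, ?_, v, rfl, ⟨v, rfl, K', hK', hK'Ω, hneg⟩, hA⟩
  intro S hS
  apply hm S hS
  have hlt : (m S : ℝ) < m' := by exact_mod_cast hm' S hS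
  have hrel : nulRel Ω v (Quot.out (Quot.mk (nulRel Ω) v)) :=
    nulRel_of_mk_eq hΩ (Quot.out_eq _).symm
  rw [nulRel_iff hΩ] at hrel
  refine ev_tri hΩ (hKΩ S hS) (Quot.out w).2.1 v.2.1 (Quot.out (Quot.mk (nulRel Ω) v)).2.1
    hlt hlt ?_ (hrel (K S) (hK S hS) (hKΩ S hS) (α S) m')
  filter_upwards [happ (α S) ⟨S, hS, rfl⟩] with ε h x hx
  exact h x (mem_biUnion hS hx)

end
end
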